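/- Consider the periodic checkerboard potential: assume additionally 1/(2ε) ∈ ℕ and V(x) = α whenever ⌊x_i/ε⌋ is even for every i = 1, …, d, and V(x) = β otherwise, and set N := (2ε)^{-d}. Assume moreover α ≤ c_α ε^{-2}. There exist constants C (depending only on d and c_α) and c' (depending only on d) such that for all integers ℓ > k ≥ 1 with β ≥ c' (ℓ−1)² ε^{-2}, the min-max values satisfy the spectral-gap estimate μ_{N k} / μ_{N ℓ^d + 1} ≤ C k²/(ℓ−1)²; in particular μ_1/μ_{N ℓ^d + 1} ≤ C (ℓ−1)^{-2}. (Corollary 5.4 of the paper: in the periodic case, spectral gaps occur only after O(ε^{-d}) eigenvalues.) -/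

import Mathlib

open MeasureTheory Real
open scoped BigOperators RealInnerProductSpace

noncomputable section

/-- A function on `ℝ^d` is periodic if it is `ℤ^d`-periodic. -/
def ZPeriodic {d : ℕ} (f : (Fin d → ℝ) → ℝ) : Prop :=
  ∀ (x : Fin d → ℝ) (k : Fin d → ℤ), f (x + fun i => (k i : ℝ)) = f x

/-- The unit cell `[0,1)^d`. -/
def unitCell (d : ℕ) : Set (Fin d → ℝ) := Set.univ.pi fun _ => Set.Ico (0 : ℝ) 1

/-- Squared Euclidean norm `|∇f(x)|²` of the (a.e. defined) gradient of `f`. -/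
def gradSq {d : ℕ} (f : (Fin d → ℝ) → ℝ) (x : Fin d → ℝ) : ℝ :=
  ∑ i, (fderiv ℝ f x (Pi.single i 1)) ^ 2

/-- `‖v‖²`, the squared `L²` norm over the unit cell. -/
def l2sq {d : ℕ} (v : (Fin d → ℝ) → ℝ) : ℝ := ∫ x in unitCell d, (v x) ^ 2

/-- `‖∇v‖²_{L²([0,1)^d)}`. -/
def gradL2sq {d : ℕ} (v : (Fin d → ℝ) → ℝ) : ℝ := ∫ x in unitCell d, gradSq v x

/-- `|||v|||²`, the squared energy norm over the unit cell. -/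
def energySq {d : ℕ} (V v : (Fin d → ℝ) → ℝ) : ℝ :=
  ∫ x in unitCell d, (gradSq v x + V x * (v x) ^ 2)

/-- The open grid cell of side `ε` with lower-left corner `ε q`. -/
def gridCell {d : ℕ} (ε : ℝ) (q : Fin d → ℤ) : Set (Fin d → ℝ) :=
  {x | ∀ i, (q i : ℝ) * ε < x i ∧ x i < ((q i : ℝ) + 1) * ε}

/-- `V` is a periodic two-valued potential, constant on each (open) grid cell. -/
def IsGridPotential {d : ℕ} (ε α β : ℝ) (V : (Fin d → ℝ) → ℝ) : Prop :=
  ZPeriodic V ∧ (∀ x, V x = α ∨ V x = β) ∧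
    ∀ q : Fin d → ℤ, (∀ x ∈ gridCell ε q, V x = α) ∨ (∀ x ∈ gridCell ε q, V x = β)

/-- The axis-aligned closed cube of side `ε m` which is the union of the grid cells
`q + r`, `r ∈ {0, …, m-1}^d`. -/
def gridCube {d : ℕ} (ε : ℝ) (q : Fin d → ℤ) (m : ℕ) : Set (Fin d → ℝ) :=
  {x | ∀ i, (q i : ℝ) * ε ≤ x i ∧ x i ≤ ((q i : ℝ) + (m : ℝ)) * ε}

/-- An α-cube: a closed cube, union of grid cells, contained in `closure {V = α}`. -/
def IsAlphaCube {d : ℕ} (ε α : ℝ) (V : (Fin d → ℝ) → ℝ) (q : Fin d → ℤ) (m : ℕ) : Prop :=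
  1 ≤ m ∧ gridCube ε q m ⊆ closure {x | V x = α}

/-- A maximal α-cube: an α-cube maximal under inclusion among α-cubes. -/
def IsMaxAlphaCube {d : ℕ} (ε α : ℝ) (V : (Fin d → ℝ) → ℝ) (q : Fin d → ℤ) (m : ℕ) : Prop :=
  IsAlphaCube ε α V q m ∧ ∀ q' m', IsAlphaCube ε α V q' m' →
    gridCube ε q m ⊆ gridCube ε q' m' → gridCube ε q m = gridCube ε q' m'

/-- `ε L` is the largest side length of a maximal α-cube (with `L = 1` if no α-cube exists):
the maximal width of a potential valley. -/
def IsValleyWidth {d : ℕ} (ε α : ℝ) (V : (Fin d → ℝ) → ℝ) (L : ℕ) : Prop :=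
  IsGreatest {m | ∃ q, IsMaxAlphaCube ε α V q m} L ∨
    ((∀ q m, ¬ IsAlphaCube ε α V q m) ∧ L = 1)

/-- `κ` is the maximal number of maximal α-cubes containing a common α-grid cell. -/
def IsOverlapNumber {d : ℕ} (ε α : ℝ) (V : (Fin d → ℝ) → ℝ) (κ : ℕ) : Prop :=
  IsGreatest {n | ∃ q : Fin d → ℤ, (∀ x ∈ gridCell ε q, V x = α) ∧
    n = Nat.card {p : (Fin d → ℤ) × ℕ //
      IsMaxAlphaCube ε α V p.1 p.2 ∧ gridCell ε q ⊆ gridCube ε p.1 p.2}} κ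

/-- A cut-off function `η` with constant `Cη`: periodic, `C¹`, `[0,1]`-valued, equal to `1`
on every α-cell, vanishing on the closed concentric subcube of side `ε/2` of every β-cell,
with `‖∇η‖_∞ ≤ Cη / ε`. -/
structure IsCutoff {d : ℕ} (ε Cη α β : ℝ) (V η : (Fin d → ℝ) → ℝ) : Prop where
  periodic : ZPeriodic η
  contDiff : ContDiff ℝ 1 η
  mem_Icc : ∀ x, η x ∈ Set.Icc (0 : ℝ) 1
  eq_one : ∀ q : Fin d → ℤ, (∀ x ∈ gridCell ε q, V x = α) → ∀ x ∈ gridCell ε q, η x = 1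
  eq_zero : ∀ q : Fin d → ℤ, (∀ x ∈ gridCell ε q, V x = β) → ∀ x : Fin d → ℝ,
    (∀ i, ((q i : ℝ) + 1/4) * ε ≤ x i ∧ x i ≤ ((q i : ℝ) + 3/4) * ε) → η x = 0
  grad_le : ∀ x, ‖fderiv ℝ η x‖ ≤ Cη / ε


/-- The set of periodic Lipschitz functions on `ℝ^d`. -/
def PeriodicLipschitz (d : ℕ) : Set ((Fin d → ℝ) → ℝ) :=
  {v | ZPeriodic v ∧ ∃ K : NNReal, LipschitzWith K v}

/-- The `m`-th Courant min-max value `μ_m` of the Schrödinger form: the infimum over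
`m`-dimensional subspaces `W` of the space of periodic Lipschitz functions of
`sup {|||v|||²/‖v‖² : v ∈ W, v ≠ 0}`, expressed as the infimum of all upper bounds `M`
of the Rayleigh quotient on some such subspace. -/
def minmaxVal (d : ℕ) (V : (Fin d → ℝ) → ℝ) (m : ℕ) : ℝ :=
  sInf {M : ℝ | ∃ W : Submodule ℝ ((Fin d → ℝ) → ℝ),
    (W : Set ((Fin d → ℝ) → ℝ)) ⊆ PeriodicLipschitz d ∧
    Module.finrank ℝ W = m ∧
    ∀ v ∈ W, v ≠ 0 → energySq V v ≤ M * l2sq v}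

lemma line_ineq {K : NNReal} {g : ℝ → ℝ} (hg : LipschitzWith K g) :
    ENNReal.ofReal ((g 1 - g 0) ^ 2) ≤ ∫⁻ t in Set.Ioc (0:ℝ) 1, ENNReal.ofReal ((deriv g t) ^ 2) := by
  have h1 : ∫ t in (0:ℝ)..1, deriv g t = g 1 - g 0 :=
    ((hg.lipschitzOnWith).absolutelyContinuousOnInterval).integral_deriv_eq_sub
  rw [intervalIntegral.integral_of_le zero_le_one] at h1
  have hb : ∀ t, ‖deriv g t‖ ≤ K := fun t => norm_deriv_le_of_lipschitz hg
  have hm : Measurable (deriv g) := measurable_deriv g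
  have hi : IntegrableOn (deriv g) (Set.Ioc (0:ℝ) 1) :=
    Measure.integrableOn_of_bounded (M := K) (by simp) hm.aestronglyMeasurable
      (Filter.Eventually.of_forall hb)
  have hi2 : IntegrableOn (fun t => (deriv g t)^2) (Set.Ioc (0:ℝ) 1) :=
    Measure.integrableOn_of_bounded (M := (K:ℝ)^2) (by simp) (hm.pow_const 2).aestronglyMeasurable
      (by refine Filter.Eventually.of_forall fun t => ?_
          rw [norm_pow]; exact pow_le_pow_left₀ (norm_nonneg _) (hb t) 2)
  rw [← ofReal_integral_eq_lintegral_ofReal hi2 (by refine Filter.Eventually.of_forall fun t => ?_; positivity)]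
  apply ENNReal.ofReal_le_ofReal
  set c := g 1 - g 0
  have h0 : 0 ≤ ∫ t in Set.Ioc (0:ℝ) 1, ((deriv g t)^2 - (2 * c) * deriv g t + c^2) := by
    apply integral_nonneg
    intro t
    have : 0 ≤ (deriv g t - c)^2 := sq_nonneg _
    simp only [Pi.zero_apply]
    nlinarith
  have hi3 : IntegrableOn (fun t => (deriv g t)^2 - (2 * c) * deriv g t) (Set.Ioc (0:ℝ) 1) :=
    hi2.sub (hi.const_mul _)
  rw [integral_add hi3 (by simp), integral_sub hi2 (hi.const_mul _),
    integral_const_mul, h1] at h0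
  simp at h0
  nlinarith

lemma shift_ineq {d : ℕ} {K : NNReal} {v : (Fin d → ℝ) → ℝ} (hv : LipschitzWith K v)
    {Q : Set (Fin d → ℝ)} (hQ : MeasurableSet Q) (hc : Convex ℝ Q) (z : Fin d → ℝ) :
    ∫⁻ y, Q.indicator (fun y => Q.indicator (fun w => ENNReal.ofReal ((v w - v y) ^ 2)) (y + z)) y
      ≤ ∫⁻ y in Q, ENNReal.ofReal ((fderiv ℝ v y z) ^ 2) := by
  let G : (Fin d → ℝ) → ENNReal := Q.indicator fun y => ENNReal.ofReal ((lineDeriv ℝ v y z) ^ 2)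
  have hG : Measurable G :=
    (((measurable_lineDeriv hv.continuous).pow_const 2).ennreal_ofReal).indicator hQ
  have key : ∀ y, Q.indicator (fun y => Q.indicator (fun w => ENNReal.ofReal ((v w - v y) ^ 2)) (y + z)) y
      ≤ ∫⁻ t in Set.Ioc (0:ℝ) 1, G (y + t • z) := by
    intro y
    by_cases h1 : y ∈ Q
    swap
    · rw [Set.indicator_of_notMem h1]; exact bot_le
    by_cases h2 : y + z ∈ Q
    swap
    · rw [Set.indicator_of_mem h1, Set.indicator_of_notMem h2]; exact bot_le
    rw [Set.indicator_of_mem h1, Set.indicator_of_mem h2]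
    have hg : LipschitzWith (K * ‖z‖₊) (fun t : ℝ => v (y + t • z)) := by
      apply hv.comp
      apply LipschitzWith.of_dist_le_mul
      intro a b
      rw [dist_eq_norm, dist_eq_norm, add_sub_add_left_eq_sub, ← sub_smul, norm_smul, mul_comm]
      rfl
    have := line_ineq hg
    simp only [one_smul, zero_smul, add_zero] at this
    refine this.trans (setLIntegral_mono' measurableSet_Ioc ?_)
    intro t ht
    have hmem : y + t • z ∈ Q := hc.add_smul_mem h1 h2 ⟨ht.1.le, ht.2⟩
    simp only [G, hmem, Set.indicator_of_mem, lineDeriv]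
    have : deriv (fun t : ℝ => v (y + t • z)) t = deriv (fun s : ℝ => v (y + t • z + s • z)) 0 := by
      have := deriv_comp_const_add (fun t : ℝ => v (y + t • z)) t 0
      rw [add_zero] at this
      rw [← this]
      congr 1
      ext s
      rw [add_smul, add_assoc]
    rw [this]
  calc _ ≤ ∫⁻ y, ∫⁻ t in Set.Ioc (0:ℝ) 1, G (y + t • z) := lintegral_mono key
    _ = ∫⁻ t in Set.Ioc (0:ℝ) 1, ∫⁻ y, G (y + t • z) := by
        apply lintegral_lintegral_swap
        apply Measurable.aemeasurable
        exact hG.comp (by fun_prop)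
    _ = ∫⁻ t in Set.Ioc (0:ℝ) 1, ∫⁻ y, G y := by
        simp_rw [lintegral_add_right_eq_self]
    _ = ∫⁻ y, G y := by simp
    _ = ∫⁻ y in Q, ENNReal.ofReal ((lineDeriv ℝ v y z) ^ 2) := by
        simp only [G]; rw [lintegral_indicator hQ]
    _ = _ := by
        apply lintegral_congr_ae
        apply ae_restrict_of_ae
        filter_upwards [hv.ae_differentiableAt (μ := volume)] with y hy
        rw [hy.lineDeriv_eq_fderiv]

lemma integrableOn_of_cont {d : ℕ} {f : (Fin d → ℝ) → ℝ} (hf : Continuous f)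
    {Q : Set (Fin d → ℝ)} (hb : Bornology.IsBounded Q) : IntegrableOn f Q :=
  (hf.locallyIntegrable.integrableOn_isCompact hb.isCompact_closure).mono_set subset_closure

lemma gradSq_nonneg {d : ℕ} (v : (Fin d → ℝ) → ℝ) (x : Fin d → ℝ) : 0 ≤ gradSq v x :=
  Finset.sum_nonneg fun _ _ => sq_nonneg _

lemma gradSq_le {d : ℕ} {K : NNReal} {v : (Fin d → ℝ) → ℝ} (hv : LipschitzWith K v)
    (x : Fin d → ℝ) : gradSq v x ≤ d * (K : ℝ) ^ 2 := by
  have : ∀ i ∈ (Finset.univ : Finset (Fin d)), (fderiv ℝ v x (Pi.single i 1)) ^ 2 ≤ (K:ℝ)^2 := by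
    intro i _
    have h1 : ‖fderiv ℝ v x (Pi.single i 1)‖ ≤ K * 1 := by
      refine (ContinuousLinearMap.le_opNorm _ _).trans ?_
      have : ‖(Pi.single i 1 : Fin d → ℝ)‖ = 1 := by rw [Pi.norm_single, norm_one]
      rw [this]
      gcongr
      exact norm_fderiv_le_of_lipschitz ℝ hv
    rw [mul_one, Real.norm_eq_abs] at h1
    exact sq_le_sq' (by linarith [(abs_le.1 h1).1]) (abs_le.1 h1).2
  calc _ ≤ ∑ i : Fin d, (K:ℝ)^2 := Finset.sum_le_sum this
    _ = _ := by simp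

lemma gradSq_measurable {d : ℕ} (v : (Fin d → ℝ) → ℝ) : Measurable (gradSq v) := by
  unfold gradSq
  exact Finset.measurable_sum _ fun i _ => (measurable_fderiv_apply_const ℝ v _).pow_const 2

lemma gradSq_integrableOn {d : ℕ} {K : NNReal} {v : (Fin d → ℝ) → ℝ} (hv : LipschitzWith K v)
    {Q : Set (Fin d → ℝ)} (hb : Bornology.IsBounded Q) : IntegrableOn (gradSq v) Q :=
  Measure.integrableOn_of_bounded (M := d * (K : ℝ) ^ 2) hb.measure_lt_top.ne
    (gradSq_measurable v).aestronglyMeasurable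
    (Filter.Eventually.of_forall fun x => by
      rw [Real.norm_eq_abs, abs_of_nonneg (gradSq_nonneg v x)]; exact gradSq_le hv x)

lemma fderiv_sq_le {d : ℕ} (v : (Fin d → ℝ) → ℝ) (y z : Fin d → ℝ) {h : ℝ} (hz : ‖z‖ ≤ h) :
    (fderiv ℝ v y z) ^ 2 ≤ (d * h ^ 2) * gradSq v y := by
  have hz0 : z = ∑ i, z i • (Pi.single i (1:ℝ) : Fin d → ℝ) := by
    ext j
    simp [Finset.sum_apply, Pi.single_apply]
  have h1 : fderiv ℝ v y z = ∑ i, z i * fderiv ℝ v y (Pi.single i 1) := by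
    conv_lhs => rw [hz0]
    simp only [map_sum, map_smul, smul_eq_mul]
  rw [h1]
  refine (Finset.sum_mul_sq_le_sq_mul_sq _ _ _).trans ?_
  unfold gradSq
  refine mul_le_mul_of_nonneg_right ?_ (gradSq_nonneg v y)
  calc _ ≤ ∑ i : Fin d, h ^ 2 := by
        apply Finset.sum_le_sum
        intro i _
        have : |z i| ≤ h := (norm_le_pi_norm z i).trans hz
        exact sq_le_sq' (abs_le.1 this).1 (abs_le.1 this).2
    _ = _ := by simp

lemma poincare {d : ℕ} {K : NNReal} {v : (Fin d → ℝ) → ℝ} (hv : LipschitzWith K v)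
    {Q : Set (Fin d → ℝ)} (hQ : MeasurableSet Q) (hc : Convex ℝ Q) (hb : Bornology.IsBounded Q)
    {h : ℝ} (hh : 0 < h) (hdiam : ∀ x ∈ Q, ∀ y ∈ Q, ‖x - y‖ ≤ h)
    (hvol : volume Q = ENNReal.ofReal (h ^ d)) (h0 : ∫ x in Q, v x = 0) :
    ∫ x in Q, (v x) ^ 2 ≤ (2 ^ d * d) * h ^ 2 * ∫ x in Q, gradSq v x := by
  have hvc := hv.continuous
  have iv : IntegrableOn v Q := integrableOn_of_cont hvc hb
  have iv2 : IntegrableOn (fun x => (v x)^2) Q := integrableOn_of_cont (hvc.pow 2) hb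
  have ig := gradSq_integrableOn hv hb
  have volr : volume.real Q = h ^ d := by
    rw [Measure.real, hvol, ENNReal.toReal_ofReal (by positivity)]
  have stepA : ∀ y, ENNReal.ofReal (h ^ d * (v y) ^ 2) ≤ ∫⁻ w in Q, ENNReal.ofReal ((v w - v y) ^ 2) := by
    intro y
    have ia : IntegrableOn (fun w => (v w - v y) ^ 2) Q :=
      integrableOn_of_cont ((hvc.sub continuous_const).pow 2) hb
    rw [← ofReal_integral_eq_lintegral_ofReal ia
      (Filter.Eventually.of_forall fun _ => sq_nonneg _)]
    apply ENNReal.ofReal_le_ofReal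
    have e : ∀ w, (v w - v y)^2 = (v w)^2 - (2 * v y) * v w + (v y)^2 := fun w => by ring
    have ic : IntegrableOn (fun _ : Fin d → ℝ => (v y)^2) Q := integrableOn_of_cont continuous_const hb
    simp_rw [e]
    have ib : IntegrableOn (fun w => (v w)^2 - (2 * v y) * v w) Q := iv2.sub (iv.const_mul _)
    rw [integral_add ib ic,
      integral_sub iv2 (iv.const_mul _), integral_const_mul, h0, setIntegral_const, volr, smul_eq_mul]
    have : 0 ≤ ∫ x in Q, (v x)^2 := integral_nonneg fun _ => sq_nonneg _
    linarith
  let F : (Fin d → ℝ) → (Fin d → ℝ) → ENNReal := fun y w =>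
    Q.indicator (fun y => Q.indicator (fun w => ENNReal.ofReal ((v w - v y) ^ 2)) w) y
  have hF : Measurable (Function.uncurry F) := by
    have : Function.uncurry F = (Q ×ˢ Q).indicator (fun p => ENNReal.ofReal ((v p.2 - v p.1)^2)) := by
      ext ⟨y, w⟩
      by_cases h1 : y ∈ Q <;> by_cases h2 : w ∈ Q <;> simp [F, h1, h2, Function.uncurry]
    rw [this]
    apply Measurable.indicator _ (hQ.prod hQ)
    have := hvc.measurable
    fun_prop
  have stepB : ∫⁻ y in Q, ∫⁻ w in Q, ENNReal.ofReal ((v w - v y) ^ 2) = ∫⁻ y, ∫⁻ w, F y w := by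
    rw [← lintegral_indicator hQ]
    congr 1
    ext y
    by_cases h1 : y ∈ Q
    · simp only [F, Set.indicator_of_mem h1]
      rw [lintegral_indicator hQ]
    · simp [F, h1]
  have stepC : ∫⁻ y, ∫⁻ w, F y w = ∫⁻ z, ∫⁻ y, F y (y + z) := by
    have : ∀ y, ∫⁻ w, F y w = ∫⁻ z, F y (y + z) := fun y =>
      (lintegral_add_left_eq_self (F y) y).symm
    simp_rw [this]
    apply lintegral_lintegral_swap
    apply Measurable.aemeasurable
    exact hF.comp (f := fun p : (Fin d → ℝ) × (Fin d → ℝ) => (p.1, p.1 + p.2)) (by fun_prop)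
  set R := ∫⁻ y in Q, ENNReal.ofReal ((d * h ^ 2) * gradSq v y) with hR
  have stepD : ∀ z, ∫⁻ y, F y (y + z) ≤ (Metric.closedBall (0 : Fin d → ℝ) h).indicator (fun _ => R) z := by
    intro z
    by_cases hz : z ∈ Metric.closedBall (0 : Fin d → ℝ) h
    · rw [Set.indicator_of_mem hz]
      refine (shift_ineq hv hQ hc z).trans (lintegral_mono fun y => ?_)
      exact ENNReal.ofReal_le_ofReal (fderiv_sq_le v y z (by simpa using hz))
    · rw [Set.indicator_of_notMem hz]
      apply le_of_eq
      rw [lintegral_eq_zero_iff' ]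
      · refine Filter.Eventually.of_forall fun y => ?_
        by_cases h1 : y ∈ Q <;> by_cases h2 : y + z ∈ Q <;> simp [F, h1, h2]
        exfalso
        have := hdiam _ h2 _ h1
        simp at this hz
        linarith
      · apply Measurable.aemeasurable
        exact hF.comp (f := fun y : (Fin d → ℝ) => (y, y + z)) (by fun_prop)
  have tot : ∫⁻ y in Q, ENNReal.ofReal (h ^ d * (v y) ^ 2) ≤ R * ENNReal.ofReal ((2*h)^d) := by
    calc _ ≤ ∫⁻ y in Q, ∫⁻ w in Q, ENNReal.ofReal ((v w - v y) ^ 2) := lintegral_mono stepA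
      _ = ∫⁻ z, ∫⁻ y, F y (y + z) := stepB.trans stepC
      _ ≤ ∫⁻ z, (Metric.closedBall (0 : Fin d → ℝ) h).indicator (fun _ => R) z := lintegral_mono stepD
      _ = _ := by
        rw [lintegral_indicator Metric.isClosed_closedBall.measurableSet, setLIntegral_const,
          Real.volume_pi_closedBall _ hh.le]
        simp
  have hRr : R = ENNReal.ofReal ((d * h ^ 2) * ∫ y in Q, gradSq v y) := by
    rw [hR, ← ofReal_integral_eq_lintegral_ofReal (ig.const_mul _), integral_const_mul]
    refine Filter.Eventually.of_forall fun y => ?_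
    have := gradSq_nonneg v y
    simp only [Pi.zero_apply]
    positivity
  have hg0 : 0 ≤ ∫ y in Q, gradSq v y := integral_nonneg fun y => gradSq_nonneg v y
  rw [hRr, ← ofReal_integral_eq_lintegral_ofReal (iv2.const_mul _)
    (Filter.Eventually.of_forall fun y => by simp only [Pi.zero_apply]; positivity),
    ← ENNReal.ofReal_mul (by positivity), integral_const_mul,
    ENNReal.ofReal_le_ofReal_iff (by positivity)] at tot
  rw [mul_pow] at tot
  have hp : 0 < h ^ d := by positivity
  refine le_of_mul_le_mul_left ?_ hp
  linarith

lemma unitCell_bounded (d : ℕ) : Bornology.IsBounded (unitCell d) :=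
  Bornology.IsBounded.pi fun _ => Metric.isBounded_Ico 0 1

lemma unitCell_measurable (d : ℕ) : MeasurableSet (unitCell d) :=
  MeasurableSet.univ_pi fun _ => measurableSet_Ico

lemma l2sq_pos {d : ℕ} {v : (Fin d → ℝ) → ℝ} (hp : ZPeriodic v) (hc : Continuous v)
    (h0 : v ≠ 0) : 0 < l2sq v := by
  obtain ⟨x, hx⟩ : ∃ x, v x ≠ 0 := by
    by_contra hcon
    push Not at hcon
    exact h0 (funext hcon)
  set y : Fin d → ℝ := fun i => Int.fract (x i) with hy
  have hvy : v y ≠ 0 := by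
    have := hp y (fun i => ⌊x i⌋)
    have e : (y + fun i => ((⌊x i⌋ : ℤ) : ℝ)) = x := by
      ext i; simp [hy, Int.fract_add_floor]
    rw [e] at this
    rwa [← this]
  have hUo : IsOpen {z | v z ≠ 0} := isOpen_ne_fun hc continuous_const
  have hIo : IsOpen (Set.univ.pi fun _ : Fin d => Set.Ioo (0:ℝ) 1) :=
    isOpen_set_pi Set.finite_univ fun _ _ => isOpen_Ioo
  have hcl : y ∈ closure (Set.univ.pi fun _ : Fin d => Set.Ioo (0:ℝ) 1) := by
    rw [closure_pi_set]
    intro i _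
    rw [closure_Ioo (by norm_num)]
    exact ⟨Int.fract_nonneg _, (Int.fract_lt_one _).le⟩
  have hne := mem_closure_iff.1 hcl _ hUo hvy
  have hpos : 0 < volume ({z | v z ≠ 0} ∩ (Set.univ.pi fun _ : Fin d => Set.Ioo (0:ℝ) 1)) :=
    (hUo.inter hIo).measure_pos _ hne
  unfold l2sq
  rw [setIntegral_pos_iff_support_of_nonneg_ae (Filter.Eventually.of_forall fun _ => sq_nonneg _)
    (integrableOn_of_cont (hc.pow 2) (unitCell_bounded d))]
  refine hpos.trans_le (measure_mono ?_)
  rintro z ⟨h1, h2⟩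
  refine ⟨by simpa [Function.mem_support] using h1, fun i hi => Set.Ioo_subset_Ico_self (h2 i hi)⟩

open scoped Classical in
lemma V_measurable {d : ℕ} {ε α β : ℝ} {V : (Fin d → ℝ) → ℝ}
    (hV : ∀ x : Fin d → ℝ, V x = if ∀ i, Even ⌊x i / ε⌋ then α else β) : Measurable V := by
  rw [funext hV]
  refine Measurable.ite ?_ measurable_const measurable_const
  rw [Set.ofPred_forall]
  refine MeasurableSet.iInter fun i => ?_
  have : Measurable fun x : Fin d → ℝ => ⌊x i / ε⌋ := by fun_prop
  exact this (t := {n | Even n}) (MeasurableSpace.measurableSet_top)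

open scoped Classical in
lemma V_mem {d : ℕ} {ε α β : ℝ} {V : (Fin d → ℝ) → ℝ} (h0 : 0 ≤ α) (hab : α ≤ β)
    (hV : ∀ x : Fin d → ℝ, V x = if ∀ i, Even ⌊x i / ε⌋ then α else β) (x) :
    0 ≤ V x ∧ V x ≤ β := by
  rw [hV]; split_ifs <;> constructor <;> linarith

lemma Vv_integrableOn {d : ℕ} {β : ℝ} {V v : (Fin d → ℝ) → ℝ} (hVm : Measurable V)
    (hVb : ∀ x, 0 ≤ V x ∧ V x ≤ β) (hv : Continuous v) {Q : Set (Fin d → ℝ)}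
    (hb : Bornology.IsBounded Q) : IntegrableOn (fun x => V x * (v x) ^ 2) Q := by
  have iv2 : IntegrableOn (fun x => (v x)^2) Q := integrableOn_of_cont (hv.pow 2) hb
  refine (iv2.const_mul β).mono' (hVm.mul (hv.measurable.pow_const 2)).aestronglyMeasurable ?_
  refine Filter.Eventually.of_forall fun x => ?_
  rw [Real.norm_eq_abs, abs_of_nonneg (mul_nonneg (hVb x).1 (sq_nonneg _))]
  exact mul_le_mul_of_nonneg_right (hVb x).2 (sq_nonneg _)

lemma energySq_nonneg {d : ℕ} {V : (Fin d → ℝ) → ℝ} (hV : ∀ x, 0 ≤ V x) (v) :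
    0 ≤ energySq V v :=
  integral_nonneg fun x => add_nonneg (gradSq_nonneg v x) (mul_nonneg (hV x) (sq_nonneg _))

/-- lower index of a subcube -/
def subIdx {d m ℓ : ℕ} (p : Fin d → Fin m × Fin ℓ) (i : Fin d) : ℤ :=
  ((2 * (p i).1.1 : ℕ) : ℤ) * ℓ + ((p i).2.1 : ℕ)

/-- the subcubes -/
def subCube {d m ℓ : ℕ} (h : ℝ) (p : Fin d → Fin m × Fin ℓ) : Set (Fin d → ℝ) :=
  Set.univ.pi fun i => Set.Ico ((subIdx p i : ℝ) * h) (((subIdx p i : ℝ) + 1) * h)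

lemma subIdx_div {d m ℓ : ℕ} (p : Fin d → Fin m × Fin ℓ) (i : Fin d) :
    subIdx p i / (ℓ : ℤ) = 2 * (p i).1.1 := by
  have h2 := (p i).2.2
  have : (ℓ : ℤ) ≠ 0 := by omega
  unfold subIdx
  rw [add_comm, Int.add_mul_ediv_right _ _ this, Int.ediv_eq_zero_of_lt (by omega) (by omega)]
  push_cast; ring

lemma subIdx_mod {d m ℓ : ℕ} (p : Fin d → Fin m × Fin ℓ) (i : Fin d) :
    subIdx p i % (ℓ : ℤ) = (p i).2.1 := by
  have h2 := (p i).2.2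
  unfold subIdx
  rw [add_comm, Int.add_mul_emod_self_right, Int.emod_eq_of_lt (by omega) (by omega)]

lemma mem_subCube {d m ℓ : ℕ} {h : ℝ} (hh : 0 < h) (p : Fin d → Fin m × Fin ℓ) (x) :
    x ∈ subCube h p ↔ ∀ i, ⌊x i / h⌋ = subIdx p i := by
  simp only [subCube, Set.mem_univ_pi, Set.mem_Ico, Int.floor_eq_iff, le_div_iff₀ hh, div_lt_iff₀ hh]

lemma subCube_disj {d m ℓ : ℕ} {h : ℝ} (hh : 0 < h) :
    Pairwise (Function.onFun Disjoint (fun p : Fin d → Fin m × Fin ℓ => subCube h p)) := by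
  intro p p' hne
  rw [Function.onFun, Set.disjoint_left]
  intro x hx hx'
  rw [mem_subCube hh] at hx hx'
  apply hne
  ext i
  · have h1 := subIdx_div p i
    have h2 := subIdx_div p' i
    rw [← hx i] at h1
    rw [← hx' i] at h2
    omega
  · have h1 := subIdx_mod p i
    have h2 := subIdx_mod p' i
    rw [← hx i] at h1
    rw [← hx' i] at h2
    omega

lemma floor_sub {ε : ℝ} {ℓ : ℕ} (hℓ : 0 < ℓ) (t : ℝ) : ⌊t / ε⌋ = ⌊t / (ε / ℓ)⌋ / (ℓ : ℤ) := by
  rw [← Int.floor_div_natCast]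
  congr 1
  have : (ℓ : ℝ) ≠ 0 := by positivity
  by_cases h : ε = 0
  · simp [h]
  field_simp

lemma subCube_even {d m ℓ : ℕ} {ε : ℝ} (hε : 0 < ε) (hℓ : 0 < ℓ) (p : Fin d → Fin m × Fin ℓ) {x}
    (hx : x ∈ subCube (ε / ℓ) p) (i) : ⌊x i / ε⌋ = 2 * (p i).1.1 := by
  rw [mem_subCube (by positivity)] at hx
  rw [floor_sub hℓ, hx, subIdx_div]

lemma subCube_sub {d m ℓ : ℕ} {ε : ℝ} (hε : 0 < ε) (hm : 2 * ε * (m : ℝ) = 1) (hℓ : 0 < ℓ)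
    (p : Fin d → Fin m × Fin ℓ) : subCube (ε / ℓ) p ⊆ unitCell d := by
  intro x hx i _
  have h := subCube_even hε hℓ p hx i
  rw [Int.floor_eq_iff, le_div_iff₀ hε, div_lt_iff₀ hε] at h
  have h2 : (((p i).1.1 : ℕ) : ℝ) + 1 ≤ m := by exact_mod_cast (p i).1.2
  push_cast at h
  constructor
  · exact le_trans (by positivity) h.1
  · nlinarith

lemma subCube_cover {d m ℓ : ℕ} {ε : ℝ} (hε : 0 < ε) (hm : 2 * ε * (m : ℝ) = 1) (hℓ : 0 < ℓ)
    {x : Fin d → ℝ} (hx : x ∈ unitCell d) (he : ∀ i, Even ⌊x i / ε⌋) :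
    ∃ p : Fin d → Fin m × Fin ℓ, x ∈ subCube (ε / ℓ) p := by
  have H : ∀ i, ∃ q : Fin m × Fin ℓ, ⌊x i / (ε / ℓ)⌋ = ((2 * q.1.1 : ℕ) : ℤ) * ℓ + (q.2.1 : ℕ) := by
    intro i
    obtain ⟨j, hj⟩ := he i
    have hxi := hx i (Set.mem_univ i)
    have h0 : 0 ≤ ⌊x i / ε⌋ := Int.floor_nonneg.2 (div_nonneg hxi.1 hε.le)
    have h1 : ⌊x i / ε⌋ < 2 * m := by
      rw [Int.floor_lt, div_lt_iff₀ hε]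
      push_cast
      nlinarith [hxi.2]
    have hl : (0:ℤ) < ℓ := by omega
    have hr0 := Int.emod_nonneg ⌊x i / (ε / ℓ)⌋ hl.ne'
    have hr1 := Int.emod_lt_of_pos ⌊x i / (ε / ℓ)⌋ hl
    have hd := Int.mul_ediv_add_emod ⌊x i / (ε / ℓ)⌋ ℓ
    rw [← floor_sub hℓ, hj] at hd
    refine ⟨(⟨j.toNat, by omega⟩, ⟨(⌊x i / (ε / ℓ)⌋ % ℓ).toNat, by omega⟩), ?_⟩
    push_cast
    rw [Int.toNat_of_nonneg hr0, Int.toNat_of_nonneg (by omega)]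
    linarith
  choose p hp using H
  refine ⟨p, (mem_subCube (by positivity) p x).2 fun i => hp i⟩

lemma subCube_poincare {d m ℓ : ℕ} {h : ℝ} (hh : 0 < h) (p : Fin d → Fin m × Fin ℓ)
    {K : NNReal} {v : (Fin d → ℝ) → ℝ} (hv : LipschitzWith K v)
    (h0 : ∫ x in subCube h p, v x = 0) :
    ∫ x in subCube h p, (v x) ^ 2 ≤ (2 ^ d * d) * h ^ 2 * ∫ x in subCube h p, gradSq v x := by
  refine poincare hv (MeasurableSet.univ_pi fun _ => measurableSet_Ico)
    (convex_pi fun _ _ => convex_Ico _ _) (Bornology.IsBounded.pi fun _ => Metric.isBounded_Ico _ _) hh ?_ ?_ h0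
  · intro x hx y hy
    rw [pi_norm_le_iff_of_nonneg hh.le]
    intro i
    have h1 := hx i (Set.mem_univ i)
    have h2 := hy i (Set.mem_univ i)
    simp only [Set.mem_Ico] at h1 h2
    rw [Pi.sub_apply, Real.norm_eq_abs, abs_le]
    constructor <;> linarith
  · rw [Real.volume_pi_Ico]
    have : ∀ i, ((subIdx p i : ℝ) + 1) * h - (subIdx p i : ℝ) * h = h := fun i => by ring
    simp only [this]
    simp [ENNReal.ofReal_pow hh.le]

open scoped Classical in
lemma lower_bound {d : ℕ} (hd : 1 ≤ d) {ε α β : ℝ} {V : (Fin d → ℝ) → ℝ} {m ℓ : ℕ}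
    (hε : 0 < ε) (hm : 2 * ε * (m : ℝ) = 1) (h0 : 0 ≤ α) (hab : α ≤ β)
    (hV : ∀ x : Fin d → ℝ, V x = if ∀ i, Even ⌊x i / ε⌋ then α else β)
    (hℓ : 1 < ℓ) (hβ : ((ℓ : ℝ) - 1) ^ 2 / ε ^ 2 ≤ β) {M : ℝ}
    {W : Submodule ℝ ((Fin d → ℝ) → ℝ)}
    (hW : (W : Set ((Fin d → ℝ) → ℝ)) ⊆ PeriodicLipschitz d)
    (hfr : Module.finrank ℝ W = m ^ d * ℓ ^ d + 1)
    (hM : ∀ v ∈ W, v ≠ 0 → energySq V v ≤ M * l2sq v) :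
    ((ℓ : ℝ) - 1) ^ 2 / ε ^ 2 / (2 ^ d * d) ≤ M := by
  set h : ℝ := ε / ℓ with hhdef
  have hℓ0 : 0 < ℓ := by omega
  have hh : 0 < h := by positivity
  have hl1 : (1:ℝ) < ℓ := by exact_mod_cast hℓ
  have hQb : ∀ p : Fin d → Fin m × Fin ℓ, Bornology.IsBounded (subCube h p) := fun p =>
    Bornology.IsBounded.pi fun _ => Metric.isBounded_Ico _ _
  have hQm : ∀ p : Fin d → Fin m × Fin ℓ, MeasurableSet (subCube h p) := fun p =>
    MeasurableSet.univ_pi fun _ => measurableSet_Ico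
  have hcont : ∀ w : W, Continuous (w : (Fin d → ℝ) → ℝ) := fun w => by
    obtain ⟨_, K, hK⟩ := hW w.2
    exact hK.continuous
  let T : W →ₗ[ℝ] ((Fin d → Fin m × Fin ℓ) → ℝ) :=
    { toFun := fun w p => ∫ x in subCube h p, (w : (Fin d → ℝ) → ℝ) x
      map_add' := by
        intro a b
        ext p
        exact integral_add (integrableOn_of_cont (hcont a) (hQb p)) (integrableOn_of_cont (hcont b) (hQb p))
      map_smul' := by
        intro c a
        ext p
        exact integral_const_mul c _ }
  have : FiniteDimensional ℝ W := Module.finite_of_finrank_pos (by omega)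
  have hker : LinearMap.ker T ≠ ⊥ := by
    apply LinearMap.ker_ne_bot_of_finrank_lt
    rw [hfr, Module.finrank_fintype_fun_eq_card]
    simp [mul_pow]
  obtain ⟨w, hwk, hw0⟩ := Submodule.exists_mem_ne_zero_of_ne_bot hker
  obtain ⟨v, hvW⟩ := w
  have hv0 : v ≠ 0 := fun hc => hw0 (Subtype.ext hc)
  have hTv : ∀ p : Fin d → Fin m × Fin ℓ, ∫ x in subCube h p, v x = 0 := fun p =>
    congrFun (LinearMap.mem_ker.1 hwk) p
  obtain ⟨hper, K, hK⟩ := hW hvW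
  have hvc := hK.continuous
  have hMv := hM v hvW hv0
  have hpos := l2sq_pos hper hvc hv0
  set A : Set (Fin d → ℝ) := ⋃ p ∈ (Finset.univ : Finset (Fin d → Fin m × Fin ℓ)), subCube h p with hA
  have hAm : MeasurableSet A := Finset.measurableSet_biUnion _ fun p _ => hQm p
  have hAs : A ⊆ unitCell d := Set.iUnion₂_subset fun p _ => subCube_sub hε hm hℓ0 p
  have hub := unitCell_bounded d
  have hAb := hub.subset hAs
  have hBb : Bornology.IsBounded (unitCell d \ A) := hub.subset Set.sdiff_subset
  have hVm := V_measurable hV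
  have hVb := V_mem h0 hab hV
  have iv2 : ∀ {Q : Set (Fin d → ℝ)}, Bornology.IsBounded Q → IntegrableOn (fun x => (v x)^2) Q :=
    fun hb => integrableOn_of_cont (hvc.pow 2) hb
  have ig : ∀ {Q : Set (Fin d → ℝ)}, Bornology.IsBounded Q → IntegrableOn (gradSq v) Q :=
    fun hb => gradSq_integrableOn hK hb
  have ie : ∀ {Q : Set (Fin d → ℝ)}, Bornology.IsBounded Q →
      IntegrableOn (fun x => gradSq v x + V x * (v x)^2) Q :=
    fun hb => (ig hb).add (Vv_integrableOn hVm hVb hvc hb)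
  have split : ∀ f : (Fin d → ℝ) → ℝ, IntegrableOn f (unitCell d) →
      ∫ x in unitCell d, f x = (∫ x in A, f x) + ∫ x in unitCell d \ A, f x := by
    intro f hf
    rw [← integral_inter_add_sdiff hAm hf, Set.inter_eq_right.2 hAs]
  have hAsum : ∀ f : (Fin d → ℝ) → ℝ, IntegrableOn f A →
      ∫ x in A, f x = ∑ p : Fin d → Fin m × Fin ℓ, ∫ x in subCube h p, f x := by
    intro f hf
    refine integral_biUnion_finset _ (fun p _ => hQm p) ((subCube_disj hh).set_pairwise _) ?_
    intro p hp
    exact hf.mono_set (Set.subset_biUnion_of_mem (u := fun p => subCube h p) hp)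
  have hP : ∫ x in A, (v x)^2 ≤ (2 ^ d * d) * h ^ 2 * ∫ x in A, gradSq v x := by
    rw [hAsum _ (iv2 hAb), hAsum _ (ig hAb), Finset.mul_sum]
    exact Finset.sum_le_sum fun p _ => subCube_poincare hh p hK (hTv p)
  have hE1 : ∫ x in A, gradSq v x ≤ ∫ x in A, (gradSq v x + V x * (v x)^2) :=
    setIntegral_mono (ig hAb) (ie hAb) fun x =>
      le_add_of_nonneg_right (mul_nonneg (hVb x).1 (sq_nonneg _))
  have hE2 : β * ∫ x in unitCell d \ A, (v x)^2 ≤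
      ∫ x in unitCell d \ A, (gradSq v x + V x * (v x)^2) := by
    rw [← integral_const_mul]
    refine setIntegral_mono_on ((iv2 hBb).const_mul β) (ie hBb)
      ((unitCell_measurable d).diff hAm) fun x hx => ?_
    have hVx : V x = β := by
      rw [hV, if_neg]
      intro he
      obtain ⟨p, hp⟩ := subCube_cover hε hm hℓ0 hx.1 he
      exact hx.2 (Set.mem_biUnion (Finset.mem_coe.2 (Finset.mem_univ p)) hp)
    rw [hVx]
    exact le_add_of_nonneg_left (gradSq_nonneg v x)
  have hl2 : l2sq v = _ := split _ (iv2 hub)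
  have hen : energySq V v = _ := split _ (ie hub)
  have hg0 : 0 ≤ ∫ x in A, gradSq v x := integral_nonneg fun x => gradSq_nonneg v x
  have hb0 : 0 ≤ ∫ x in unitCell d \ A, (v x)^2 := integral_nonneg fun x => sq_nonneg _
  set a1 := ∫ x in A, (v x)^2
  set b1 := ∫ x in unitCell d \ A, (v x)^2
  set g1 := ∫ x in A, gradSq v x
  set C : ℝ := 2 ^ d * d with hC
  have hC1 : 1 ≤ C := by
    have h1 : (1:ℝ) ≤ d := by exact_mod_cast hd
    have h2 : (1:ℝ) ≤ 2 ^ d := one_le_pow₀ (by norm_num)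
    nlinarith
  set S : ℝ := ((ℓ : ℝ) - 1) ^ 2 / ε ^ 2 with hS
  have hSpos : 0 < S := by
    have : 0 < (ℓ:ℝ) - 1 := by linarith
    positivity
  have hSh : S * h ^ 2 ≤ 1 := by
    have : S * h ^ 2 = (((ℓ:ℝ) - 1) / ℓ) ^ 2 := by
      rw [hS, hhdef]; field_simp
    rw [this]
    apply pow_le_one₀
    · apply div_nonneg <;> linarith
    · rw [div_le_one (by linarith)]; linarith
  -- S * l2 ≤ C * energy
  have e1 : S * a1 ≤ C * g1 := by
    calc S * a1 ≤ S * (C * h^2 * g1) := mul_le_mul_of_nonneg_left hP hSpos.le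
      _ = (S * h^2) * (C * g1) := by ring
      _ ≤ 1 * (C * g1) := mul_le_mul_of_nonneg_right hSh (by positivity)
      _ = _ := one_mul _
  have e2 : S * b1 ≤ C * (β * b1) := by
    have : S * b1 ≤ β * b1 := mul_le_mul_of_nonneg_right hβ hb0
    have : 1 * (β * b1) ≤ C * (β * b1) := by
      apply mul_le_mul_of_nonneg_right hC1
      exact mul_nonneg (h0.trans hab) hb0
    linarith
  have e3 : S * l2sq v ≤ (C * M) * l2sq v := by
    have : C * energySq V v ≤ C * (M * l2sq v) := mul_le_mul_of_nonneg_left hMv (by linarith)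
    have : C * (g1 + β * b1) ≤ C * energySq V v := by
      apply mul_le_mul_of_nonneg_left _ (by linarith)
      rw [hen]; linarith
    have : S * l2sq v = S * a1 + S * b1 := by rw [hl2]; ring
    nlinarith
  have e4 : S ≤ C * M := le_of_mul_le_mul_right e3 hpos
  rw [div_le_iff₀ (by linarith)]
  linarith

/-- distance to the nearest integer -/
def perDist (t : ℝ) : ℝ := |t - round t|

lemma perDist_lip (s t : ℝ) : |perDist s - perDist t| ≤ |s - t| := by
  have key : ∀ s t : ℝ, perDist s ≤ perDist t + |s - t| := by
    intro s t
    have h1 := round_le s (round t)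
    have h2 : |s - round t| ≤ |t - round t| + |s - t| := by
      have : s - round t = (t - round t) + (s - t) := by ring
      rw [this]; exact abs_add_le _ _
    exact h1.trans h2
  rw [abs_le]
  have h1 := key s t
  have h2 := key t s
  rw [abs_sub_comm] at h2
  constructor <;> linarith

lemma perDist_add_int (t : ℝ) (n : ℤ) : perDist (t + n) = perDist t := by
  unfold perDist
  rw [round_add_intCast]
  congr 1
  push_cast
  ring

/-- periodic hat function with center `c` and radius `r` -/
def bump {d : ℕ} (r : ℝ) (c x : Fin d → ℝ) : ℝ :=
  max 0 (1 - r⁻¹ * ‖fun i => perDist (x i - c i)‖)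

lemma bump_nonneg {d : ℕ} (r : ℝ) (c x : Fin d → ℝ) : 0 ≤ bump r c x := le_max_left _ _

lemma bump_le_one {d : ℕ} {r : ℝ} (hr : 0 < r) (c x : Fin d → ℝ) : bump r c x ≤ 1 := by
  apply max_le zero_le_one
  have : 0 ≤ r⁻¹ * ‖fun i => perDist (x i - c i)‖ := by positivity
  linarith

lemma bump_periodic {d : ℕ} (r : ℝ) (c : Fin d → ℝ) : ZPeriodic (bump r c) := by
  intro x k
  unfold bump
  have : ∀ i, perDist ((x + fun i => (k i : ℝ)) i - c i) = perDist (x i - c i) := by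
    intro i
    rw [← perDist_add_int (x i - c i) (k i)]
    congr 1
    simp only [Pi.add_apply]
    ring
  simp_rw [this]

lemma bump_lip {d : ℕ} {r : ℝ} (hr : 0 < r) (c : Fin d → ℝ) :
    LipschitzWith (Real.toNNReal r⁻¹) (bump r c) := by
  apply LipschitzWith.of_dist_le_mul
  intro x y
  rw [Real.coe_toNNReal _ (by positivity), Real.dist_eq]
  unfold bump
  rw [max_comm 0, max_comm 0]
  refine (abs_max_sub_max_le_abs _ _ _).trans ?_
  set f := fun i => perDist (x i - c i)
  set g := fun i => perDist (y i - c i)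
  have e : 1 - r⁻¹ * ‖f‖ - (1 - r⁻¹ * ‖g‖) = r⁻¹ * (‖g‖ - ‖f‖) := by ring
  rw [e, abs_mul, abs_of_pos (inv_pos.2 hr)]
  apply mul_le_mul_of_nonneg_left _ (inv_pos.2 hr).le
  rw [abs_sub_comm]
  refine (abs_norm_sub_norm_le f g).trans ?_
  rw [pi_norm_le_iff_of_nonneg dist_nonneg]
  intro i
  refine (perDist_lip _ _).trans ?_
  rw [sub_sub_sub_cancel_right]
  exact dist_le_pi_dist x y i

lemma bump_supp {d : ℕ} {r : ℝ} (hr : 0 < r) {c x : Fin d → ℝ}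
    (hc : ∀ i, r ≤ c i ∧ c i ≤ 1 - r) (hx : x ∈ unitCell d) (h : bump r c x ≠ 0) :
    ∀ i, |x i - c i| < r := by
  have h1 : 0 < 1 - r⁻¹ * ‖fun i => perDist (x i - c i)‖ := by
    by_contra hcon
    exact h (max_eq_left (not_lt.1 hcon))
  have h2 : ‖fun i => perDist (x i - c i)‖ < r := by
    have : r⁻¹ * ‖fun i => perDist (x i - c i)‖ < 1 := by linarith
    rwa [inv_mul_lt_iff₀ hr, mul_one] at this
  intro i
  have h3 : perDist (x i - c i) < r :=
    ((le_abs_self _).trans (norm_le_pi_norm (fun i => perDist (x i - c i)) i)).trans_lt h2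
  have hxi := hx i (Set.mem_univ i)
  have hci := hc i
  unfold perDist at h3
  have h4 := abs_lt.1 h3
  have h5 : (-1 : ℝ) < round (x i - c i) := by linarith [hxi.1]
  have h6 : (round (x i - c i) : ℝ) < 1 := by linarith [hxi.2]
  have h7 : round (x i - c i) = 0 := by
    have a : -1 < round (x i - c i) := by exact_mod_cast h5
    have b : round (x i - c i) < 1 := by exact_mod_cast h6
    omega
  rw [h7] at h3
  simpa using h3

lemma bump_half {d : ℕ} {r : ℝ} (hr : 0 < r) {c x : Fin d → ℝ}
    (hx : ∀ i, |x i - c i| ≤ r / 2) : 1 / 2 ≤ bump r c x := by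
  refine le_trans ?_ (le_max_right _ _)
  have : ‖fun i => perDist (x i - c i)‖ ≤ r / 2 := by
    rw [pi_norm_le_iff_of_nonneg (by positivity)]
    intro i
    have h := round_le (x i - c i) 0
    simp only [Int.cast_zero, sub_zero] at h
    rw [Real.norm_eq_abs]
    unfold perDist
    rw [abs_abs]
    exact h.trans (hx i)
  have : r⁻¹ * ‖fun i => perDist (x i - c i)‖ ≤ r⁻¹ * (r / 2) := by gcongr
  have e : r⁻¹ * (r / 2) = 1 / 2 := by field_simp
  linarith

lemma bump_fderiv {d : ℕ} {r : ℝ} {c x : Fin d → ℝ} (h : bump r c x = 0) :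
    fderiv ℝ (bump r c) x = 0 := by
  apply IsLocalMin.fderiv_eq_zero
  refine Filter.Eventually.of_forall fun y => ?_
  rw [h]; exact bump_nonneg r c y

lemma periodicLipschitz_span {d : ℕ} {S : Set ((Fin d → ℝ) → ℝ)} (hS : S ⊆ PeriodicLipschitz d) :
    (Submodule.span ℝ S : Set ((Fin d → ℝ) → ℝ)) ⊆ PeriodicLipschitz d := by
  intro v hv
  induction hv using Submodule.span_induction with
  | mem x hx => exact hS hx
  | zero => exact ⟨fun _ _ => rfl, 0, LipschitzWith.const 0⟩
  | add x y _ _ hx hy =>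
    obtain ⟨h1, K1, hK1⟩ := hx
    obtain ⟨h2, K2, hK2⟩ := hy
    refine ⟨fun z k => ?_, K1 + K2, hK1.add hK2⟩
    simp only [Pi.add_apply x y, h1 z k, h2 z k]
  | smul a x _ hx =>
    obtain ⟨h1, K1, hK1⟩ := hx
    refine ⟨fun z k => ?_, ‖a‖₊ * K1, (lipschitzWith_smul a).comp hK1⟩
    simp only [Pi.smul_apply a x, h1 z k]

lemma upper_bound {d : ℕ} {ι : Type} [Fintype ι] [Nonempty ι] [Nonempty (Fin d)] (c : ι → Fin d → ℝ)
    {r α β : ℝ} (hr : 0 < r) (hα : 0 ≤ α)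
    (hc : ∀ p i, r ≤ c p i ∧ c p i ≤ 1 - r)
    (hdisj : ∀ p q, p ≠ q → ∃ i, 2 * r ≤ |c p i - c q i|) {V : (Fin d → ℝ) → ℝ}
    (hVm : Measurable V) (hVb : ∀ x, 0 ≤ V x ∧ V x ≤ β)
    (hVα : ∀ p x, (∀ i, |x i - c p i| < r) → V x ≤ α) :
    minmaxVal d V (Fintype.card ι) ≤ 4 * 2 ^ d * (d * r⁻¹ ^ 2 + α) := by
  set φ : ι → (Fin d → ℝ) → ℝ := fun p => bump r (c p) with hφ
  have hlip : ∀ p, LipschitzWith (Real.toNNReal r⁻¹) (φ p) := fun p => bump_lip hr (c p)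
  have hφd : ∀ x ∈ unitCell d, ∀ p q, p ≠ q → φ p x ≠ 0 → φ q x = 0 := by
    intro x hx p q hpq hp
    by_contra hq
    have h1 := bump_supp hr (hc p) hx hp
    have h2 := bump_supp hr (hc q) hx hq
    obtain ⟨i, hi⟩ := hdisj p q hpq
    have : |c p i - c q i| ≤ |x i - c p i| + |x i - c q i| := by
      rw [abs_sub_comm (x i) (c p i)]
      have : c p i - c q i = (c p i - x i) + (x i - c q i) := by ring
      rw [this]; exact abs_add_le _ _
    linarith [h1 i, h2 i]
  have hcu : ∀ p, c p ∈ unitCell d := fun p i _ => ⟨by linarith [(hc p i).1], by linarith [(hc p i).2]⟩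
  have hφc : ∀ p, φ p (c p) ≠ 0 := by
    intro p
    have := bump_half (c := c p) (x := c p) hr (by intro i; simp; positivity)
    simp only [hφ]; linarith
  have hind : LinearIndependent ℝ φ := by
    rw [Fintype.linearIndependent_iff]
    intro a ha q
    have := congrFun ha (c q)
    rw [Finset.sum_apply, Finset.sum_eq_single q] at this
    · simp only [Pi.smul_apply, smul_eq_mul, Pi.zero_apply] at this
      exact (mul_eq_zero.1 this).resolve_right (hφc q)
    · intro p _ hpq
      simp [hφd (c q) (hcu q) q p hpq.symm (hφc q)]
    · simp
  apply csInf_le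
  · refine ⟨0, ?_⟩
    rintro M ⟨W, hW, hfr, hM⟩
    have hpos : 0 < Module.finrank ℝ W := by rw [hfr]; exact Fintype.card_pos
    have : Nontrivial W := Module.nontrivial_of_finrank_pos hpos
    obtain ⟨w, hw⟩ := exists_ne (0 : W)
    have hw0 : (w : (Fin d → ℝ) → ℝ) ≠ 0 := fun h => hw (Subtype.ext h)
    obtain ⟨hp, K, hK⟩ := hW w.2
    have h1 := l2sq_pos hp hK.continuous hw0
    have h2 := (energySq_nonneg (fun x => (hVb x).1) w.1).trans (hM w w.2 hw0)
    exact nonneg_of_mul_nonneg_left h2 h1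
  refine ⟨Submodule.span ℝ (Set.range φ), ?_, finrank_span_eq_card hind, ?_⟩
  · apply periodicLipschitz_span
    rintro _ ⟨p, rfl⟩
    exact ⟨bump_periodic r (c p), _, hlip p⟩
  intro v hv _
  have hvPL := periodicLipschitz_span (S := Set.range φ) (by
    rintro _ ⟨p, rfl⟩
    exact ⟨bump_periodic r (c p), _, hlip p⟩) hv
  obtain ⟨-, K, hK⟩ := hvPL
  have hvc := hK.continuous
  obtain ⟨a, rfl⟩ := (Submodule.mem_span_range_iff_exists_fun ℝ).1 hv
  set v : (Fin d → ℝ) → ℝ := ∑ p, a p • φ p with hvdef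
  set L : ℝ := d * r⁻¹ ^ 2 + α with hL
  have hL0 : 0 ≤ L := by positivity
  have hvx : ∀ x, v x = ∑ p, a p * φ p x := fun x => by
    rw [hvdef, Finset.sum_apply]; rfl
  let B : ι → Set (Fin d → ℝ) := fun p => Metric.ball (c p) r
  let B' : ι → Set (Fin d → ℝ) := fun p => Metric.closedBall (c p) (r / 2)
  have hBm : ∀ p, MeasurableSet (B p) := fun p => Metric.isOpen_ball.measurableSet
  have hBm' : ∀ p, MeasurableSet (B' p) := fun p => Metric.isClosed_closedBall.measurableSet
  have hB'u : ∀ p, B' p ⊆ unitCell d := by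
    intro p x hx i _
    have : |x i - c p i| ≤ r / 2 := (dist_le_pi_dist x (c p) i).trans hx
    have h2 := abs_le.1 this
    constructor <;> linarith [(hc p i).1, (hc p i).2]
  -- pointwise bounds
  have up : ∀ᵐ x ∂volume, x ∈ unitCell d →
      gradSq v x + V x * (v x) ^ 2 ≤ ∑ p, (B p).indicator (fun _ => (a p) ^ 2 * L) x := by
    have hae : ∀ᵐ x ∂(volume : Measure (Fin d → ℝ)), ∀ p, DifferentiableAt ℝ (φ p) x :=
      ae_all_iff.2 fun p => (hlip p).ae_differentiableAt
    filter_upwards [hae] with x hdx hx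
    have hfd : fderiv ℝ v x = ∑ p, a p • fderiv ℝ (φ p) x :=
      (HasFDerivAt.sum fun p _ => (hdx p).hasFDerivAt.const_smul (a p)).fderiv
    have hnn : ∀ p, 0 ≤ (B p).indicator (fun _ => (a p) ^ 2 * L) x := fun p =>
      Set.indicator_nonneg (fun _ _ => by positivity) x
    by_cases hex : ∃ p, φ p x ≠ 0
    · obtain ⟨p, hp⟩ := hex
      have hz : ∀ q, q ≠ p → φ q x = 0 := fun q hq => hφd x hx p q hq.symm hp
      have e1 : v x = a p * φ p x := by
        rw [hvx, Finset.sum_eq_single p]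
        · intro q _ hq; rw [hz q hq, mul_zero]
        · simp
      have e2 : fderiv ℝ v x = a p • fderiv ℝ (φ p) x := by
        rw [hfd, Finset.sum_eq_single p]
        · intro q _ hq; rw [bump_fderiv (hz q hq), smul_zero]
        · simp
      have e3 : gradSq v x = (a p) ^ 2 * gradSq (φ p) x := by
        unfold gradSq
        rw [e2, Finset.mul_sum]
        refine Finset.sum_congr rfl fun i _ => ?_
        simp [mul_pow]
      have hs := bump_supp hr (hc p) hx hp
      have hxB : x ∈ B p := by
        rw [Metric.mem_ball, dist_pi_lt_iff hr]
        exact hs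
      have g := gradSq_le (hlip p) x
      rw [Real.coe_toNNReal _ (by positivity)] at g
      have hVx := hVα p x hs
      have b0 := bump_nonneg r (c p) x
      have b1 := bump_le_one hr (c p) x
      have b2 : V x * (φ p x) ^ 2 ≤ α * 1 := by
        apply mul_le_mul hVx (pow_le_one₀ b0 b1) (sq_nonneg _) hα
      calc gradSq v x + V x * (v x) ^ 2 = (a p)^2 * (gradSq (φ p) x + V x * (φ p x)^2) := by
            rw [e3, e1]; ring
        _ ≤ (a p)^2 * L := by
            apply mul_le_mul_of_nonneg_left _ (sq_nonneg _)
            rw [hL]; linarith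
        _ = (B p).indicator (fun _ => (a p) ^ 2 * L) x := by rw [Set.indicator_of_mem hxB]
        _ ≤ _ := Finset.single_le_sum (f := fun p => (B p).indicator (fun _ => (a p) ^ 2 * L) x)
            (fun q _ => hnn q) (Finset.mem_univ p)
    · push Not at hex
      have e1 : v x = 0 := by rw [hvx]; simp [hex]
      have e2 : fderiv ℝ v x = 0 := by
        rw [hfd]
        exact Finset.sum_eq_zero fun p _ => by rw [bump_fderiv (hex p), smul_zero]
      have e3 : gradSq v x = 0 := by simp [gradSq, e2]
      rw [e1, e3]
      simpa using Finset.sum_nonneg fun q _ => hnn q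
  have low : ∀ x ∈ unitCell d, ∑ p, (B' p).indicator (fun _ => (a p) ^ 2 * (1/4)) x ≤ (v x) ^ 2 := by
    intro x hx
    have e1 : (v x)^2 = ∑ p, (a p)^2 * (φ p x)^2 := by
      by_cases hex : ∃ p, φ p x ≠ 0
      · obtain ⟨p, hp⟩ := hex
        have hz : ∀ q, q ≠ p → φ q x = 0 := fun q hq => hφd x hx p q hq.symm hp
        rw [hvx, Finset.sum_eq_single p, Finset.sum_eq_single p]
        · ring
        · intro q _ hq; rw [hz q hq]; ring
        · simp
        · intro q _ hq; rw [hz q hq, mul_zero]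
        · simp
      · push Not at hex
        rw [hvx]; simp [hex]
    rw [e1]
    apply Finset.sum_le_sum
    intro p _
    by_cases hxB : x ∈ B' p
    · rw [Set.indicator_of_mem hxB]
      have : 1 / 2 ≤ φ p x := bump_half hr fun i => (dist_le_pi_dist x (c p) i).trans hxB
      apply mul_le_mul_of_nonneg_left _ (sq_nonneg _)
      nlinarith
    · rw [Set.indicator_of_notMem hxB]; positivity
  have hub := unitCell_bounded d
  have hutop : volume (unitCell d) ≠ ⊤ := hub.measure_lt_top.ne
  have iI : ∀ (D : Set (Fin d → ℝ)) (t : ℝ), MeasurableSet D →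
      IntegrableOn (D.indicator fun _ => t) (unitCell d) := fun D t hD =>
    (integrableOn_of_cont continuous_const hub).indicator hD
  have E1 : energySq V v ≤ ∑ p, (a p)^2 * L * (2 * r) ^ d := by
    calc energySq V v ≤ ∫ x in unitCell d, ∑ p, (B p).indicator (fun _ => (a p) ^ 2 * L) x := by
          apply setIntegral_mono_on_ae
          · exact (gradSq_integrableOn hK hub).add (Vv_integrableOn hVm hVb hvc hub)
          · exact integrable_finsetSum _ fun p _ => iI _ _ (hBm p)
          · exact unitCell_measurable d
          · exact up
      _ = ∑ p, ∫ x in unitCell d, (B p).indicator (fun _ => (a p) ^ 2 * L) x :=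
          integral_finsetSum _ fun p _ => iI _ _ (hBm p)
      _ ≤ _ := by
          apply Finset.sum_le_sum
          intro p _
          rw [setIntegral_indicator (hBm p), setIntegral_const, smul_eq_mul, mul_comm]
          apply mul_le_mul_of_nonneg_left _ (by positivity)
          calc volume.real (unitCell d ∩ B p) ≤ volume.real (B p) :=
                measureReal_mono Set.inter_subset_right (Metric.isBounded_ball.measure_lt_top.ne)
            _ = _ := by
                rw [Measure.real, Real.volume_pi_ball _ hr, ENNReal.toReal_ofReal (by positivity)]
                simp
  have E2 : ∑ p, (a p)^2 * (1/4) * r ^ d ≤ l2sq v := by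
    calc _ = ∑ p, ∫ x in unitCell d, (B' p).indicator (fun _ => (a p) ^ 2 * (1/4)) x := by
          refine Finset.sum_congr rfl fun p _ => ?_
          rw [setIntegral_indicator (hBm' p), setIntegral_const, smul_eq_mul, mul_comm,
            Set.inter_eq_right.2 (hB'u p), Measure.real, Real.volume_pi_closedBall _ (by positivity),
            ENNReal.toReal_ofReal (by positivity)]
          congr 1
          rw [Fintype.card_fin, mul_div_cancel₀ r two_ne_zero]
      _ = ∫ x in unitCell d, ∑ p, (B' p).indicator (fun _ => (a p) ^ 2 * (1/4)) x :=
          (integral_finsetSum _ fun p _ => iI _ _ (hBm' p)).symm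
      _ ≤ _ := by
          apply setIntegral_mono_on
          · exact integrable_finsetSum _ fun p _ => iI _ _ (hBm' p)
          · exact integrableOn_of_cont (hvc.pow 2) hub
          · exact unitCell_measurable d
          · exact low
  calc energySq V v ≤ _ := E1
    _ = 4 * 2 ^ d * L * ∑ p, (a p)^2 * (1/4) * r ^ d := by
        rw [Finset.mul_sum]
        refine Finset.sum_congr rfl fun p _ => ?_
        rw [mul_pow]; ring
    _ ≤ _ := mul_le_mul_of_nonneg_left E2 (by positivity)

open scoped Classical in
lemma alpha_cell {d : ℕ} {ε α β : ℝ} {V : (Fin d → ℝ) → ℝ} (hε : 0 < ε)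
    (hV : ∀ x : Fin d → ℝ, V x = if ∀ i, Even ⌊x i / ε⌋ then α else β)
    {j : Fin d → ℕ} {x : Fin d → ℝ} (h : ∀ i, 2 * j i * ε ≤ x i ∧ x i < (2 * j i + 1) * ε) :
    V x = α := by
  rw [hV, if_pos]
  intro i
  refine ⟨j i, ?_⟩
  rw [Int.floor_eq_iff, le_div_iff₀ hε, div_lt_iff₀ hε]
  push_cast
  constructor <;> nlinarith [h i]

open scoped Classical in
lemma upper_family {d : ℕ} (hd : 1 ≤ d) {ε α β : ℝ} {V : (Fin d → ℝ) → ℝ} {m k : ℕ}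
    (hε : 0 < ε) (hm : 2 * ε * (m : ℝ) = 1) (h0 : 0 ≤ α) (hab : α ≤ β)
    (hV : ∀ x : Fin d → ℝ, V x = if ∀ i, Even ⌊x i / ε⌋ then α else β)
    (hk : 1 ≤ k) {ι : Type} [Fintype ι] [Nonempty ι] (f : ι → (Fin d → Fin m) × Fin k)
    (hf : Function.Injective f) :
    minmaxVal d V (Fintype.card ι) ≤ 4 * 2 ^ d * (d * (4 * (k:ℝ) ^ 2 / ε ^ 2) + α) := by
  have hkr : (0:ℝ) < k := by exact_mod_cast hk
  have : Nonempty (Fin d) := ⟨⟨0, hd⟩⟩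
  set r : ℝ := ε / (2 * k) with hr
  have hr0 : 0 < r := by positivity
  have hrk : 2 * k * r = ε := by rw [hr]; field_simp
  have e : (4 * (k:ℝ) ^ 2 / ε ^ 2) = r⁻¹ ^ 2 := by rw [hr]; field_simp; norm_num
  rw [e]
  let c : ι → Fin d → ℝ := fun p i => 2 * ((f p).1 i : ℕ) * ε + (2 * ((f p).2 : ℕ) + 1) * r
  have hs : ∀ p, (((f p).2 : ℕ) : ℝ) + 1 ≤ k := fun p => by exact_mod_cast (f p).2.2
  have hs' : ∀ p, (2 * (((f p).2 : ℕ) : ℝ) + 2) * r ≤ ε := fun p => by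
    nlinarith [hs p]
  have hj : ∀ p i, (((f p).1 i : ℕ) : ℝ) + 1 ≤ m := fun p i => by exact_mod_cast ((f p).1 i).2
  have hj' : ∀ p i, 2 * (((f p).1 i : ℕ) : ℝ) * ε + 2 * ε ≤ 1 := fun p i => by
    nlinarith [hj p i]
  have hs0 : ∀ p, 0 ≤ (((f p).2 : ℕ) : ℝ) * r := fun p => by positivity
  have hj0 : ∀ p i, 0 ≤ (((f p).1 i : ℕ) : ℝ) * ε := fun p i => by positivity
  refine upper_bound c hr0 h0 ?_ ?_ (V_measurable hV) (V_mem h0 hab hV) ?_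
  · intro p i
    simp only [c]
    constructor <;> linarith [hs0 p, hj0 p i, hs' p, hj' p i]
  · intro p q hpq
    by_cases h1 : (f p).1 = (f q).1
    · have h2 : (f p).2 ≠ (f q).2 := fun h => hpq (hf (Prod.ext h1 h))
      have h3 : ((f p).2 : ℕ) ≠ ((f q).2 : ℕ) := fun h => h2 (Fin.ext h)
      refine ⟨⟨0, hd⟩, ?_⟩
      simp only [c, h1]
      rw [le_abs]
      rcases lt_or_gt_of_ne h3 with h | h
      · right
        have : (((f p).2 : ℕ) : ℝ) + 1 ≤ ((f q).2 : ℕ) := by exact_mod_cast h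
        nlinarith
      · left
        have : (((f q).2 : ℕ) : ℝ) + 1 ≤ ((f p).2 : ℕ) := by exact_mod_cast h
        nlinarith
    · obtain ⟨i, hi⟩ := Function.ne_iff.1 h1
      have h3 : ((f p).1 i : ℕ) ≠ ((f q).1 i : ℕ) := fun h => hi (Fin.ext h)
      refine ⟨i, ?_⟩
      simp only [c]
      rw [le_abs]
      rcases lt_or_gt_of_ne h3 with h | h
      · right
        have : (((f p).1 i : ℕ) : ℝ) + 1 ≤ ((f q).1 i : ℕ) := by exact_mod_cast h
        have : (((f p).1 i : ℕ) : ℝ) * ε + ε ≤ ((f q).1 i : ℕ) * ε := by nlinarith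
        linarith [hs' p, hs' q, hs0 p, hs0 q]
      · left
        have : (((f q).1 i : ℕ) : ℝ) + 1 ≤ ((f p).1 i : ℕ) := by exact_mod_cast h
        have : (((f q).1 i : ℕ) : ℝ) * ε + ε ≤ ((f p).1 i : ℕ) * ε := by nlinarith
        linarith [hs' p, hs' q, hs0 p, hs0 q]
  · intro p x hx
    apply le_of_eq
    refine alpha_cell hε hV (j := fun i => ((f p).1 i : ℕ)) fun i => ?_
    have := abs_lt.1 (hx i)
    simp only [c] at this
    constructor <;> linarith [hs' p, hs0 p]

lemma ratio_bound {a b A B : ℝ} (hA : 0 ≤ A) (hB : 0 < B) (ha : a ≤ A) (hb : B ≤ b ∨ b = 0) :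
    a / b ≤ A / B := by
  rcases hb with hb | hb
  · exact div_le_div₀ hA ha hB hb
  · rw [hb, div_zero]; positivity

open scoped Classical in
/-- Corollary 5.4 of the paper: spectral-gap estimate for the periodic
checkerboard potential (`1/(2ε) = m ∈ ℕ`, `V(x) = α` iff `⌊xᵢ/ε⌋` is even for all `i`,
`N = (2ε)^{-d} = m^d`), assuming moreover `α ≤ c_α ε⁻²`. There are constants `c'`
(depending only on `d`) and `C` (depending only on `d` and `c_α`) such that for all
integers `ℓ > k ≥ 1` with `β ≥ c'(ℓ-1)²ε⁻²` one has
`μ_{Nk}/μ_{Nℓ^d+1} ≤ C k²/(ℓ-1)²`; in particular `μ₁/μ_{Nℓ^d+1} ≤ C (ℓ-1)⁻²`. -/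
theorem statement17 (d : ℕ) (hd : 1 ≤ d) :
    ∃ c' : ℝ, 0 < c' ∧ ∀ c_α : ℝ, 0 < c_α → ∃ C : ℝ, 0 < C ∧
      ∀ (ε α β : ℝ) (V : (Fin d → ℝ) → ℝ) (m : ℕ),
        0 < ε → 0 < m → 2 * ε * (m : ℝ) = 1 →
        0 ≤ α → α ≤ β →
        (∀ x : Fin d → ℝ, V x = if ∀ i, Even ⌊x i / ε⌋ then α else β) →
        α ≤ c_α / ε ^ 2 →
        ∀ k ℓ : ℕ, 1 ≤ k → k < ℓ → c' * ((ℓ : ℝ) - 1) ^ 2 / ε ^ 2 ≤ β →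
          minmaxVal d V (m ^ d * k) / minmaxVal d V (m ^ d * ℓ ^ d + 1) ≤
              C * (k : ℝ) ^ 2 / ((ℓ : ℝ) - 1) ^ 2 ∧
            minmaxVal d V 1 / minmaxVal d V (m ^ d * ℓ ^ d + 1) ≤
              C * (((ℓ : ℝ) - 1) ^ 2)⁻¹ := by
  have hd1 : (1:ℝ) ≤ d := by exact_mod_cast hd
  refine ⟨1, one_pos, fun cα hcα => ⟨4 * 2 ^ d * (d * 4 + cα) * (2 ^ d * d), by positivity, ?_⟩⟩
  intro ε α β V m hε hm0 hm h0 hab hV hα k ℓ hk hkℓ hβ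
  have hℓ : 1 < ℓ := by omega
  have hℓr : (0:ℝ) < (ℓ:ℝ) - 1 := by
    have : (1:ℝ) < ℓ := by exact_mod_cast hℓ
    linarith
  rw [one_mul] at hβ
  have hden : ((ℓ : ℝ) - 1) ^ 2 / ε ^ 2 / (2 ^ d * d) ≤ minmaxVal d V (m ^ d * ℓ ^ d + 1) ∨
      minmaxVal d V (m ^ d * ℓ ^ d + 1) = 0 := by
    unfold minmaxVal
    set S := {M : ℝ | ∃ W : Submodule ℝ ((Fin d → ℝ) → ℝ),
      (W : Set ((Fin d → ℝ) → ℝ)) ⊆ PeriodicLipschitz d ∧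
      Module.finrank ℝ W = m ^ d * ℓ ^ d + 1 ∧
      ∀ v ∈ W, v ≠ 0 → energySq V v ≤ M * l2sq v} with hS
    rcases S.eq_empty_or_nonempty with he | hne
    · right; rw [he, Real.sInf_empty]
    · left
      apply le_csInf hne
      rintro M ⟨W, hW, hfr, hM⟩
      exact lower_bound hd hε hm h0 hab hV hℓ hβ hW hfr hM
  have hB : 0 < ((ℓ : ℝ) - 1) ^ 2 / ε ^ 2 / (2 ^ d * d) := by positivity
  have hnum : ∀ k : ℕ, 1 ≤ k → 4 * 2 ^ d * (d * (4 * (k:ℝ) ^ 2 / ε ^ 2) + α) ≤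
      4 * 2 ^ d * (d * 4 + cα) * (k : ℝ) ^ 2 / ε ^ 2 := by
    intro k hk
    have hk1 : (1:ℝ) ≤ (k:ℝ) ^ 2 := one_le_pow₀ (by exact_mod_cast hk)
    have h1 : cα / ε ^ 2 ≤ cα / ε ^ 2 * (k:ℝ)^2 := le_mul_of_one_le_right (by positivity) hk1
    have : 4 * 2 ^ d * (d * 4 + cα) * (k : ℝ) ^ 2 / ε ^ 2 =
        4 * 2 ^ d * (d * (4 * (k:ℝ) ^ 2 / ε ^ 2) + cα / ε ^ 2 * (k:ℝ)^2) := by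
      field_simp
    rw [this]
    gcongr
    linarith
  have : NeZero m := ⟨hm0.ne'⟩
  have : NeZero k := ⟨by omega⟩
  constructor
  · have hu := upper_family hd hε hm h0 hab hV hk (ι := (Fin d → Fin m) × Fin k) id
      Function.injective_id
    have hcard : Fintype.card ((Fin d → Fin m) × Fin k) = m ^ d * k := by simp
    rw [hcard] at hu
    refine (ratio_bound (by positivity) hB (hu.trans (hnum k hk)) hden).trans (le_of_eq ?_)
    field_simp
  · have hu := upper_family hd hε hm h0 hab hV le_rfl (ι := Unit) (fun _ => (fun _ => 0, 0))
      (fun _ _ _ => rfl)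
    rw [Fintype.card_unit] at hu
    refine (ratio_bound (by positivity) hB (hu.trans (hnum 1 le_rfl)) hden).trans (le_of_eq ?_)
    field_simp
    simp

end
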